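/- arXiv:1905.13585 — 2 statements merged into one kernel-verified Lean document; each statement's English description precedes it below -/
import Mathlib

section
/- For every a_0, a_1, ..., a_{r-1} ∈ A and every i with 0 ≤ i ≤ r-1, one has G^{-i}( ∑_{l=0}^{r-1} h^l · π^*(a_l) ) = a_i. In other words, the map B → A^r sending x to (G^{0}(x), G^{-1}(x), ..., G^{-(r-1)}(x)) is a left inverse of the map A^r → B sending (a_0, ..., a_{r-1}) to ∑_{l=0}^{r-1} h^l · π^*(a_l). -/
/-- `Q r j` is the polynomial `P_{r-1-j}` of the downward recursion:
`P_{r-1} = (-1)^{r-1}` and for `0 ≤ i < r-1`,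
`P_i = (-1)^r · ∑_{k=1}^{r-1-i} T_k · P_{k+i}`, where `T_k` is the
variable `MvPolynomial.X k`. -/
noncomputable def Q (r : ℕ) : ℕ → MvPolynomial ℕ ℤ
  | 0 => (-1) ^ (r - 1)
  | (j + 1) => (-1) ^ r * ∑ k ∈ Finset.range (j + 1), MvPolynomial.X (k + 1) * Q r (j - k)
  termination_by j => j
  decreasing_by omega

/-- The polynomial `P_i` in `ℤ[T_1, …, T_{r-1}]`. -/
noncomputable def P (r i : ℕ) : MvPolynomial ℕ ℤ := Q r (r - 1 - i)

/-!
Put `Q_m = P_{r-1-m}`, with the recursion continued to all `m ≥ 0`. The recursion is the one for the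
coefficients of a reciprocal power series: if `t₀ = (-1)^(r-1)`, then `∑ tₖ Xᵏ` and `∑ Q_m(t) Xᵐ`
are mutually inverse. Take `tₖ = π_*(h^(r-1+k))`; since `π_*` kills the lower powers of `h`, we get
`(∑ π_*(hᵏ) Xᵏ) (∑ Q_m(t) Xᵐ) = X^(r-1)`. For `l ≤ r - 1`, the value `G^{-i}(h^l)` is the
coefficient of `X^(r-1-i+l)` in this product, so the `G^{-i}` are dual to the powers of `h`; as they
inherit the projection formula from `π_*`, they read off the coefficients of `∑ h^l π^*(a_l)`.
-/

section PowerSeries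

open PowerSeries Finset

theorem mk_eq_X_pow_mul_mk {R : Type*} [Semiring R] {n : ℕ} {s : ℕ → R}
    (hs : ∀ k < n, s k = 0) : PowerSeries.mk s = X ^ n * PowerSeries.mk fun k => s (n + k) := by
  ext m
  rw [coeff_X_pow_mul', coeff_mk]
  split_ifs with hnm
  · rw [coeff_mk, Nat.add_sub_cancel' hnm]
  · exact hs m (not_le.mp hnm)

variable {A : Type*} [CommRing A] {r : ℕ}

theorem aeval_Q_zero (t : ℕ → A) : MvPolynomial.aeval t (Q r 0) = (-1) ^ (r - 1) := by
  simp [Q]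

theorem aeval_Q_succ (t : ℕ → A) (m : ℕ) :
    MvPolynomial.aeval t (Q r (m + 1)) =
      (-1) ^ r * ∑ p ∈ antidiagonal m, t (p.1 + 1) * MvPolynomial.aeval t (Q r p.2) := by
  rw [Nat.sum_antidiagonal_eq_sum_range_succ fun k l => t (k + 1) * MvPolynomial.aeval t (Q r l)]
  simp [Q]

theorem mk_mul_mk_aeval_Q (hr : 1 ≤ r) {t : ℕ → A} (ht : t 0 = (-1) ^ (r - 1)) :
    PowerSeries.mk t * PowerSeries.mk (fun m => MvPolynomial.aeval t (Q r m)) = 1 := by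
  have sq_sign : (-1 : A) ^ (r - 1) * (-1) ^ (r - 1) = 1 := by
    rw [← mul_pow, neg_one_mul, neg_neg, one_pow]
  have sign_mul : (-1 : A) ^ (r - 1) * (-1) ^ r = -1 := by
    rw [← mul_pow_sub_one (Nat.ne_of_gt hr), mul_left_comm, sq_sign, mul_one]
  ext m
  simp only [coeff_mul, coeff_mk]
  cases m with
  | zero => simp [aeval_Q_zero, ht, sq_sign]
  | succ m =>
    rw [Nat.sum_antidiagonal_succ, ht, aeval_Q_succ, ← mul_assoc, sign_mul, neg_one_mul,
      neg_add_cancel, coeff_one, if_neg m.succ_ne_zero]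

theorem mk_mul_mk_aeval_Q_eq_X_pow (hr : 1 ≤ r) {s : ℕ → A} (hlow : ∀ k < r - 1, s k = 0)
    (htop : s (r - 1) = (-1) ^ (r - 1)) :
    PowerSeries.mk s *
        PowerSeries.mk (fun m => MvPolynomial.aeval (fun k => s (r - 1 + k)) (Q r m)) =
      X ^ (r - 1) := by
  rw [mk_eq_X_pow_mul_mk hlow, mul_assoc, mk_mul_mk_aeval_Q hr htop, mul_one]

theorem sum_aeval_Q_mul (hr : 1 ≤ r) {s : ℕ → A} (hlow : ∀ k < r - 1, s k = 0)
    (htop : s (r - 1) = (-1) ^ (r - 1)) {l : ℕ} (hl : l ≤ r - 1) (d : ℕ) :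
    ∑ j ∈ range (d + 1), MvPolynomial.aeval (fun k => s (r - 1 + k)) (Q r (d - j)) * s (j + l) =
      if d + l = r - 1 then 1 else 0 := by
  have hprod := mk_mul_mk_aeval_Q_eq_X_pow hr hlow htop
  rw [mk_eq_X_pow_mul_mk fun k hk => hlow k (hk.trans_le hl), mul_assoc] at hprod
  have hcoeff := congrArg (coeff (d + l)) hprod
  rw [coeff_X_pow_mul, coeff_X_pow, coeff_mul, Nat.sum_antidiagonal_eq_sum_range_succ_mk] at hcoeff
  simpa only [coeff_mk, mul_comm, add_comm] using hcoeff

end PowerSeries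

section ProjBundleCoeff

open Finset

variable {A B : Type*} [CommRing A] [Semiring B]

/-- The map `G^{-i} : B → A` of the inverse projective bundle formula: it extracts the coefficient
of `h ^ i`. The variable `T_k` of `P_{i+j}` is evaluated at `π_*(h ^ (r - 1 + k))`. -/
noncomputable def projBundleCoeff (r : ℕ) (πpush : B →+ A) (h : B) (i : ℕ) : B →+ A :=
  ∑ j ∈ range (r - 1 - i + 1),
    (AddMonoidHom.mulLeft
      (MvPolynomial.aeval (fun k => πpush (h ^ (r - 1 + k))) (P r (i + j)))).comp
      (πpush.comp (AddMonoidHom.mulLeft (h ^ j)))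

theorem projBundleCoeff_apply (r : ℕ) (πpush : B →+ A) (h : B) (i : ℕ) (x : B) :
    projBundleCoeff r πpush h i x = ∑ j ∈ range (r - 1 - i + 1),
      MvPolynomial.aeval (fun k => πpush (h ^ (r - 1 + k))) (P r (i + j)) * πpush (h ^ j * x) := by
  simp [projBundleCoeff]

theorem projBundleCoeff_mul (r : ℕ) {πpush : B →+ A} (h : B) (i : ℕ) {b : B} {c : A}
    (hbc : ∀ x, πpush (x * b) = πpush x * c) (x : B) :
    projBundleCoeff r πpush h i (x * b) = projBundleCoeff r πpush h i x * c := by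
  simp only [projBundleCoeff_apply, sum_mul, ← mul_assoc, hbc]

variable {r : ℕ} {πpush : B →+ A} {h : B}

theorem projBundleCoeff_pow (hr : 1 ≤ r) (hlow : ∀ k < r - 1, πpush (h ^ k) = 0)
    (htop : πpush (h ^ (r - 1)) = (-1) ^ (r - 1)) {i l : ℕ} (hi : i ≤ r - 1) (hl : l ≤ r - 1) :
    projBundleCoeff r πpush h i (h ^ l) = if l = i then 1 else 0 := by
  have hdiag : r - 1 - i + l = r - 1 ↔ l = i := by omega
  simpa only [projBundleCoeff_apply, P, ← Nat.sub_sub, ← pow_add, hdiag] using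
    sum_aeval_Q_mul hr hlow htop hl (r - 1 - i)

theorem stmt3_general (hr : 1 ≤ r) {πpull : A → B}
    (proj : ∀ (b : B) (c : A), πpush (b * πpull c) = πpush b * c)
    (hlow : ∀ k < r - 1, πpush (h ^ k) = 0) (htop : πpush (h ^ (r - 1)) = (-1) ^ (r - 1))
    (a : ℕ → A) {i : ℕ} (hi : i ≤ r - 1) :
    projBundleCoeff r πpush h i (∑ l ∈ range r, h ^ l * πpull (a l)) = a i := by
  calc projBundleCoeff r πpush h i (∑ l ∈ range r, h ^ l * πpull (a l))
      = ∑ l ∈ range r, projBundleCoeff r πpush h i (h ^ l) * a l := by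
        simp only [map_sum, projBundleCoeff_mul r h i fun x => proj x (a _)]
    _ = ∑ l ∈ range r, (if l = i then 1 else 0) * a l :=
        sum_congr rfl fun l hl => by
          rw [projBundleCoeff_pow hr hlow htop hi (Nat.le_sub_one_of_lt (mem_range.mp hl))]
    _ = a i := by
        simp only [ite_mul, one_mul, zero_mul, sum_ite_eq', mem_range]
        exact if_pos (Nat.lt_of_le_sub_one hr hi)

end ProjBundleCoeff

/-- Abstract algebraic content of the inverse of the projective bundle formula.
Let `π^* : A → B` be a ring homomorphism and `π_* : B → A` an additive map
satisfying the projection formula, and let `h ∈ B` with `π_*(h^i) = 0` for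
`0 ≤ i ≤ r-2` and `π_*(h^{r-1}) = (-1)^{r-1}`.  With
`G^{-i}(x) = ∑_{j=0}^{r-1-i} P_{i+j}(π_*(h^r), …, π_*(h^{2r-2})) · π_*(h^j·x)`,
one has `G^{-i}(∑_{l=0}^{r-1} h^l·π^*(a_l)) = a_i` for `0 ≤ i ≤ r-1`. -/
theorem stmt3 (r : ℕ) (hr : 1 ≤ r) {A B : Type*} [CommRing A] [CommRing B]
    (πpull : A →+* B) (πpush : B →+ A)
    (proj : ∀ (a : A) (b : B), πpush (πpull a * b) = a * πpush b)
    (h : B)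
    (hlow : ∀ i : ℕ, i < r - 1 → πpush (h ^ i) = 0)
    (htop : πpush (h ^ (r - 1)) = (-1) ^ (r - 1))
    (a : ℕ → A) (i : ℕ) (hi : i ≤ r - 1) :
    ∑ j ∈ Finset.range (r - 1 - i + 1),
        MvPolynomial.aeval (R := ℤ) (fun k => πpush (h ^ (r - 1 + k))) (P r (i + j)) *
          πpush (h ^ j * ∑ l ∈ Finset.range r, h ^ l * πpull (a l)) = a i := by
  simpa only [projBundleCoeff_apply] using
    stmt3_general hr (fun b c => by rw [mul_comm, proj, mul_comm]) hlow htop a hi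
end

section
/- Define B : ℤ → ℕ by B(k) = ∑_{m+n=k} b(m)·c(n) and H : ℤ×ℤ → ℕ by H(p,q) = ∑_{r+u=p, s+v=q} h(r,s)·g(u,v). Then B(k) = ∑_{p+q=k} H(p,q) holds for every integer k if and only if both b(k) = ∑_{p+q=k} h(p,q) and c(k) = ∑_{p+q=k} g(p,q) hold for every integer k. -/
/-!
Taking antidiagonal sums is the pushforward of finitely supported functions along addition, hence a
homomorphism for convolution. So the question is when the convolution of `b ≤ b'` and `c ≤ c'`
agrees with that of `b'` and `c'`. Summing over all degrees turns convolution into multiplication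
of totals, and `β * γ = β' * γ'` with `0 < β ≤ β'` and `0 < γ ≤ γ'` forces `β = β'` and `γ = γ'`;
a pointwise inequality between functions with equal totals is an equality.
-/

open scoped AddMonoidAlgebra

theorem degree_strictMono {α R : Type*} [AddCommMonoid R] [PartialOrder R]
    [IsOrderedCancelAddMonoid R] : StrictMono (Finsupp.degree : (α →₀ R) →+ R) := by
  classical
  intro f g hfg
  obtain ⟨hle, a, ha⟩ := Finsupp.lt_def.mp hfg
  have degree_eq (e : α →₀ R) (he : e.support ⊆ f.support ∪ g.support) :
      e.degree = ∑ x ∈ f.support ∪ g.support, e x :=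
    e.sum_of_support_subset he (fun _ r => r) fun _ _ => rfl
  have ha_mem : a ∈ f.support ∪ g.support := by
    by_contra hmem
    simp_all
  rw [degree_eq f Finset.subset_union_left, degree_eq g Finset.subset_union_right]
  exact Finset.sum_lt_sum (fun x _ => hle x) ⟨a, ha_mem, ha⟩

theorem mapDomain_apply_eq_finsum_mem {α β M : Type*} [AddCommMonoid M] (f : α → β) (x : α →₀ M)
    (b : β) : x.mapDomain f b = ∑ᶠ a ∈ f ⁻¹' {b}, x a := by
  classical
  rw [finsum_mem_eq_sum_filter _ _ x.hasFiniteSupport]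
  simp [Finsupp.mapDomain, Finsupp.sum, Finsupp.single_apply, Finset.sum_filter]

theorem mapDomain_addAddHom_apply {G M : Type*} [AddCommGroup G] [AddCommMonoid M]
    (h : G × G →₀ M) (k : G) :
    h.mapDomain addAddHom k = ∑ᶠ p, h (p, k - p) := by
  have fiber_eq : addAddHom ⁻¹' {k} = Set.range fun p : G => (p, k - p) := by
    ext ⟨p, q⟩
    simp [eq_sub_iff_add_eq', eq_comm]
  have section_injective : Function.Injective fun p : G => (p, k - p) :=
    fun _ _ hpq => congrArg Prod.fst hpq
  rw [mapDomain_apply_eq_finsum_mem, fiber_eq, finsum_mem_range section_injective]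

theorem degree_coeff_mul {A R : Type*} [Add A] [Semiring R] (x y : R[A]) :
    (x * y).coeff.degree = x.coeff.degree * y.coeff.degree := by
  simp only [AddMonoidAlgebra.mul_def, AddMonoidAlgebra.coeff_finsuppSum, map_finsuppSum,
    AddMonoidAlgebra.coeff_single, Finsupp.degree_single]
  simp only [Finsupp.sum, Finsupp.degree_apply, Finset.sum_mul_sum]

theorem coeff_mul_eq_finsum {A R : Type*} [AddCommGroup A] [Semiring R] (x y : R[A]) (k : A) :
    (x * y).coeff k = ∑ᶠ m, x.coeff m * y.coeff (k - m) := by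
  have support_subset :
      (Function.support fun m => x.coeff m * y.coeff (k - m)) ⊆ x.coeff.support :=
    fun m hm => Finsupp.mem_support_iff.mpr (left_ne_zero_of_mul hm)
  rw [AddMonoidAlgebra.coeff_mul_apply_left, finsum_eq_sum_of_support_subset _ support_subset]
  simp only [Finsupp.sum, neg_add_eq_sub]

theorem mul_eq_mul_iff_of_coeff_le {A R : Type*} [Add A] [Semiring R] [PartialOrder R]
    [IsStrictOrderedRing R] {x y x' y' : R[A]} (hx : x.coeff ≤ x'.coeff)
    (hy : y.coeff ≤ y'.coeff) (hx0 : 0 < x.coeff) (hy0 : 0 < y.coeff) :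
    x * y = x' * y' ↔ x = x' ∧ y = y' := by
  refine ⟨fun hmul => ?_, by rintro ⟨rfl, rfl⟩; rfl⟩
  have degree_pos {f : A →₀ R} (hf : 0 < f) : 0 < f.degree := by
    simpa using degree_strictMono hf
  have eq_of_degree_eq {z z' : R[A]} (hz : z.coeff ≤ z'.coeff)
      (hdeg : z.coeff.degree = z'.coeff.degree) : z = z' :=
    AddMonoidAlgebra.ext (hz.eq_of_not_lt fun hlt => (degree_strictMono hlt).ne hdeg)
  have hdeg := congrArg (fun z => z.coeff.degree) hmul
  simp only [degree_coeff_mul] at hdeg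
  obtain ⟨hdeg_x, hdeg_y⟩ := (mul_eq_mul_iff_eq_and_eq_of_pos
    (degree_strictMono.monotone hx) (degree_strictMono.monotone hy)
    (degree_pos hx0) (degree_pos (hy0.trans_le hy))).mp hdeg
  exact ⟨eq_of_degree_eq hx hdeg_x, eq_of_degree_eq hy hdeg_y⟩

theorem finsum_antidiagonal_convolution {G R : Type*} [AddCommGroup G] [Semiring R]
    (h g : R[G × G]) (k : G) :
    ∑ᶠ p : G, ∑ᶠ x : G × G, h.coeff x * g.coeff (p - x.1, (k - p) - x.2) =
      (h.mapDomain addAddHom * g.mapDomain addAddHom).coeff k := by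
  rw [← AddMonoidAlgebra.mapDomain_mul, AddMonoidAlgebra.coeff_mapDomain,
    mapDomain_addAddHom_apply]
  exact finsum_congr fun p => (coeff_mul_eq_finsum h g (p, k - p)).symm

theorem stmt7_general {G R : Type*} [AddCommGroup G] [Semiring R] [PartialOrder R]
    [IsStrictOrderedRing R] (b c : G →₀ R) (h g : G × G →₀ R)
    (hb : ∀ k, b k ≤ ∑ᶠ p, h (p, k - p)) (hc : ∀ k, c k ≤ ∑ᶠ p, g (p, k - p))
    (hb0 : 0 < b) (hc0 : 0 < c) :
    (∀ k, ∑ᶠ m, b m * c (k - m) = ∑ᶠ p, ∑ᶠ x : G × G, h x * g (p - x.1, (k - p) - x.2)) ↔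
      (∀ k, b k = ∑ᶠ p, h (p, k - p)) ∧ ∀ k, c k = ∑ᶠ p, g (p, k - p) := by
  simp only [← mapDomain_addAddHom_apply] at hb hc ⊢
  let B : R[G] := .ofCoeff b
  let C : R[G] := .ofCoeff c
  let H : R[G × G] := .ofCoeff h
  let K : R[G × G] := .ofCoeff g
  calc
    _ ↔ B * C = H.mapDomain addAddHom * K.mapDomain addAddHom := by
      simp only [AddMonoidAlgebra.ext_iff, Finsupp.ext_iff, ← finsum_antidiagonal_convolution,
        coeff_mul_eq_finsum B C, B, C, H, K]
    _ ↔ B = H.mapDomain addAddHom ∧ C = K.mapDomain addAddHom :=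
      mul_eq_mul_iff_of_coeff_le hb hc hb0 hc0
    _ ↔ _ := by
      simp only [AddMonoidAlgebra.ext_iff, Finsupp.ext_iff, AddMonoidAlgebra.coeff_mapDomain,
        B, C, H, K]

/-- Numerical content, via the Künneth theorem, of Lemma 5.4 (E₁-degeneration
for a product).  Let `b, c : ℤ → ℕ` and `h, g : ℤ×ℤ → ℕ` be finitely supported
with `b(k) ≤ ∑_{p+q=k} h(p,q)`, `c(k) ≤ ∑_{p+q=k} g(p,q)` for all `k`, and
`b(0) ≥ 1`, `c(0) ≥ 1`.  Set `B(k) = ∑_{m+n=k} b(m)·c(n)` and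
`H(p,q) = ∑_{r+u=p, s+v=q} h(r,s)·g(u,v)`.  Then `B(k) = ∑_{p+q=k} H(p,q)` for
all `k` iff both `b(k) = ∑_{p+q=k} h(p,q)` and `c(k) = ∑_{p+q=k} g(p,q)` hold
for all `k`. -/
theorem stmt7 (b c : ℤ →₀ ℕ) (h g : ℤ × ℤ →₀ ℕ)
    (hb : ∀ k : ℤ, b k ≤ ∑ᶠ p : ℤ, h (p, k - p))
    (hc : ∀ k : ℤ, c k ≤ ∑ᶠ p : ℤ, g (p, k - p))
    (hb0 : 1 ≤ b 0) (hc0 : 1 ≤ c 0) :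
    (∀ k : ℤ, (∑ᶠ m : ℤ, b m * c (k - m)) =
        ∑ᶠ p : ℤ, ∑ᶠ x : ℤ × ℤ, h x * g (p - x.1, (k - p) - x.2)) ↔
    ((∀ k : ℤ, b k = ∑ᶠ p : ℤ, h (p, k - p)) ∧
      (∀ k : ℤ, c k = ∑ᶠ p : ℤ, g (p, k - p))) :=
  stmt7_general b c h g hb hc (Finsupp.lt_def.mpr ⟨zero_le, 0, hb0⟩)
    (Finsupp.lt_def.mpr ⟨zero_le, 0, hc0⟩)
end
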